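/- arXiv:1611.08985 — 4 statements merged into one kernel-verified Lean document; each statement's English description precedes it below -/
import Mathlib

section
/- Jawerth embedding, constant exponents, sequence-space version: Let n ∈ ℕ, s₁ < s₀ be real numbers, 0 < p₀ < p₁ ≤ ∞ and 0 < q ≤ ∞ with s₀ − n/p₀ = s₁ − n/p₁. Then there exists a constant C > 0 such that for every complex-valued sequence γ = (γ_{j,m})_{j∈ℕ₀, m∈ℤⁿ} one has ‖γ | b^{s₁}_{p₁,p₀}(ℝⁿ)‖ ≤ C ‖γ | f^{s₀}_{p₀,q}(ℝⁿ)‖; that is, f^{s₀}_{p₀,q}(ℝⁿ) ↪ b^{s₁}_{p₁,p₀}(ℝⁿ). -/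
/-!
The `ℓ_q` norm dominates the supremum, so it suffices to treat `q = ∞`. Put
`b_{j,m} = 2^{j s₀} |γ_{j,m}|`, `A_{j,m} = b_{j,m}^{p₀}`, `θ = p₀ / p₁ ∈ [0, 1)` and
`G = sup_{j,m} A_{j,m} χ_{j,m}`. Computing the `L_{p₁}` norms of the step functions and using
`s₀ - n/p₀ = s₁ - n/p₁`, the claim becomes
`Σ_j 2^{-jn} ‖A_{j,·}‖_{ℓ_{1/θ}} ≤ C ∫ G`.

Let `N_j(k)` be the number of `m` with `A_{j,m} > 2^k`. Slicing dyadically and using the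
subadditivity of `t ↦ t^θ`, one gets `‖A_{j,·}‖_{ℓ_{1/θ}} ≤ Σ_k 2^{k+1} N_j(k)^θ`
(`rpow_tsum_le_tsum_phi`, and `le_tsum_phi_zero` for `θ = 0`, where `0^0` is read as `0`). The cubes of one scale are disjoint
and those counted by `N_j(k)` lie in `{G > 2^k}`, so `2^{-jn} N_j(k) ≤ |{G > 2^k}| =: V_k`. As
`N_j(k)` is `0` or at least `1`, only scales with `2^{-jn} ≤ V_k` contribute, and the geometric sum
`Σ_j 2^{-jn} N_j(k)^θ ≤ V_k^θ Σ_j 2^{-jn(1-θ)}` over these `j` is at most `C V_k`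
(`geometric_scales`); this is where `p₀ < p₁` and `n > 0` enter. Finally
`Σ_k 2^{k+1} V_k ≤ 4 ∫ G` (`tsum_two_pow_mul_volume_le`).
-/

open MeasureTheory ENNReal NNReal

noncomputable section

/-- The dyadic cube `Q_{j,m}` in `ℝⁿ`: centered at `2^{-j} m`, with sides parallel to the
coordinate axes and side length `2^{-j}`. -/
def Qcube (n : ℕ) (j : ℕ) (m : Fin n → ℤ) : Set (EuclideanSpace ℝ (Fin n)) :=
  {x | ∀ i, (2 : ℝ) ^ (-(j : ℝ)) * ((m i : ℝ) - 1 / 2) ≤ x i ∧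
        x i < (2 : ℝ) ^ (-(j : ℝ)) * ((m i : ℝ) + 1 / 2)}

/-- The `L_p` (quasi)norm of an `ℝ≥0∞`-valued function, `0 < p ≤ ∞`, with the essential
supremum when `p = ∞`. -/
def lpNormE {α : Type*} [MeasurableSpace α] (μ : Measure α) (p : ℝ≥0∞)
    (f : α → ℝ≥0∞) : ℝ≥0∞ :=
  if p = ∞ then essSup f μ else (∫⁻ x, f x ^ p.toReal ∂μ) ^ (1 / p.toReal)

/-- The `ℓ_q` (quasi)norm of an `ℝ≥0∞`-valued family, with the supremum when `q = ∞`. -/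
def ellqNorm {ι : Type*} (q : ℝ≥0∞) (a : ι → ℝ≥0∞) : ℝ≥0∞ :=
  if q = ∞ then ⨆ i, a i else (∑' i, a i ^ q.toReal) ^ (1 / q.toReal)

/-- The Besov sequence quasinorm
`‖γ | b^s_{p,q}‖ = (Σ_j 2^{jsq} ‖Σ_m |γ_{j,m}| χ_{j,m}‖_{L_p}^q)^{1/q}`. -/
def bSeqNorm (n : ℕ) (s : ℝ) (p q : ℝ≥0∞) (γ : ℕ → (Fin n → ℤ) → ℂ) : ℝ≥0∞ :=
  ellqNorm q fun j : ℕ =>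
    (2 : ℝ≥0∞) ^ ((j : ℝ) * s) *
      lpNormE volume p fun x =>
        ∑' m : Fin n → ℤ, (‖γ j m‖₊ : ℝ≥0∞) * (Qcube n j m).indicator (fun _ => (1 : ℝ≥0∞)) x

/-- The Triebel–Lizorkin sequence quasinorm
`‖γ | f^s_{p,q}‖ = ‖(Σ_j Σ_m 2^{jsq}|γ_{j,m}|^q χ_{j,m}(·))^{1/q}‖_{L_p}`. -/
def fSeqNorm (n : ℕ) (s : ℝ) (p q : ℝ≥0∞) (γ : ℕ → (Fin n → ℤ) → ℂ) : ℝ≥0∞ :=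
  lpNormE volume p fun x =>
    ellqNorm q fun jm : ℕ × (Fin n → ℤ) =>
      (2 : ℝ≥0∞) ^ ((jm.1 : ℝ) * s) * (‖γ jm.1 jm.2‖₊ : ℝ≥0∞) *
        (Qcube n jm.1 jm.2).indicator (fun _ => (1 : ℝ≥0∞)) x

/-! ### Sums of extended nonnegative reals -/

lemma two_rpow_ne_zero (t : ℝ) : (2 : ℝ≥0∞) ^ t ≠ 0 := by simp [ENNReal.rpow_eq_zero_iff]

lemma two_rpow_ne_top (t : ℝ) : (2 : ℝ≥0∞) ^ t ≠ ∞ := by simp [ENNReal.rpow_eq_top_iff]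

lemma two_rpow_add (s t : ℝ) : (2 : ℝ≥0∞) ^ (s + t) = 2 ^ s * 2 ^ t :=
  ENNReal.rpow_add _ _ (by simp) (by simp)

/-- Subadditivity of `t ↦ t ^ θ`, `0 < θ ≤ 1`, for infinite sums. -/
lemma tsum_rpow_le {ι : Type*} {θ : ℝ} (h0 : 0 < θ) (h1 : θ ≤ 1) (a : ι → ℝ≥0∞) :
    (∑' i, a i) ^ θ ≤ ∑' i, a i ^ θ := by
  have hfin : ∀ s : Finset ι, (∑ i ∈ s, a i) ^ θ ≤ ∑ i ∈ s, a i ^ θ := by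
    classical
    intro s
    induction s using Finset.induction_on with
    | empty => simp [h0]
    | insert i s hi ih =>
      rw [Finset.sum_insert hi, Finset.sum_insert hi]
      exact (ENNReal.rpow_add_le_add_rpow _ _ h0.le h1).trans (by gcongr)
  rw [← ENNReal.le_rpow_inv_iff h0, ENNReal.tsum_eq_iSup_sum]
  refine iSup_le fun s => ?_
  rw [ENNReal.le_rpow_inv_iff h0]
  exact (hfin s).trans (ENNReal.sum_le_tsum s)

/-- A dyadic layer-cake estimate: the powers of two below `y` add up to at most `2 y`. -/
lemma tsum_two_pow_le (y : ℝ≥0∞) :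
    ∑' k : ℤ, (if (2 : ℝ≥0∞) ^ (k : ℝ) < y then (2 : ℝ≥0∞) ^ (k : ℝ) else 0) ≤ 2 * y := by
  rcases eq_or_ne y 0 with rfl | h0
  · simp
  rcases eq_or_ne y ∞ with rfl | ht
  · simp
  obtain ⟨K, hK1, hK2⟩ := ENNReal.exists_mem_Ioc_zpow h0 ht (y := 2) (by norm_num) (by norm_num)
  rw [← ENNReal.rpow_intCast] at hK1 hK2
  have hsupp : Function.support
      (fun k : ℤ => if (2 : ℝ≥0∞) ^ (k : ℝ) < y then (2 : ℝ≥0∞) ^ (k : ℝ) else 0) ⊆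
      Set.range fun i : ℕ => K - (i : ℤ) := by
    intro k hk
    have hk' : (2 : ℝ≥0∞) ^ (k : ℝ) < y := by
      by_contra h
      exact hk (if_neg h)
    have hlt : k < K + 1 := by
      by_contra! h
      refine absurd (hk'.trans_le hK2) (not_lt.2 ?_)
      exact ENNReal.rpow_le_rpow_of_exponent_le (by norm_num) (by exact_mod_cast h)
    refine ⟨(K - k).toNat, ?_⟩
    simp only
    omega
  have hinj : Function.Injective fun i : ℕ => K - (i : ℤ) := by
    intro a b h
    simp only at h
    omega
  rw [← hinj.tsum_eq hsupp]
  calc ∑' i : ℕ, (if (2 : ℝ≥0∞) ^ ((K - (i : ℤ) : ℤ) : ℝ) < y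
          then (2 : ℝ≥0∞) ^ ((K - (i : ℤ) : ℤ) : ℝ) else 0)
      ≤ ∑' i : ℕ, (2 : ℝ≥0∞) ^ (K : ℝ) * (2⁻¹ : ℝ≥0∞) ^ i := by
        refine ENNReal.tsum_le_tsum fun i => ?_
        have : (2 : ℝ≥0∞) ^ ((K - (i : ℤ) : ℤ) : ℝ) = (2 : ℝ≥0∞) ^ (K : ℝ) * (2⁻¹ : ℝ≥0∞) ^ i := by
          push_cast
          rw [sub_eq_add_neg, two_rpow_add, ENNReal.rpow_neg, ENNReal.rpow_natCast,
            ENNReal.inv_pow]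
        split_ifs
        · exact this.le
        · exact zero_le
    _ = 2 * (2 : ℝ≥0∞) ^ (K : ℝ) := by
        rw [ENNReal.tsum_mul_left, ENNReal.tsum_geometric, ENNReal.one_sub_inv_two, inv_inv,
          mul_comm]
    _ ≤ 2 * y := by gcongr

/-- `N ^ θ`, except that the value at `N = 0` is `0` for every `θ`, in particular for `θ = 0`.
For a count `N` and `θ = 1 / r` this is the `ℓ_r` norm of the indicator sequence of a set of
`N` elements, `r = ∞` included. -/
def phi (θ : ℝ) (N : ℝ≥0∞) : ℝ≥0∞ := if N = 0 then 0 else N ^ θ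

/-- A cardinality is `0` or at least `1`, so only the scales with `2 ^ (-jn) ≤ V` contribute, and
over those the sum is geometric and dominated by its first term. -/
lemma geometric_scales (n : ℕ) (hn : 0 < n) {θ : ℝ} (h0 : 0 ≤ θ) (h1 : θ < 1) :
    ∃ C : ℝ≥0∞, C ≠ 0 ∧ C ≠ ∞ ∧ ∀ (V : ℝ≥0∞) (N : ℕ → ℝ≥0∞), (∀ j, N j = 0 ∨ 1 ≤ N j) →
      (∀ j : ℕ, (2 : ℝ≥0∞) ^ (-((j : ℝ) * n)) * N j ≤ V) →
      ∑' j : ℕ, (2 : ℝ≥0∞) ^ (-((j : ℝ) * n)) * phi θ (N j) ≤ C * V := by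
  have hn' : (0 : ℝ) < n := by exact_mod_cast hn
  set ρ : ℝ≥0∞ := (2 : ℝ≥0∞) ^ (-((n : ℝ) * (1 - θ))) with hρ
  have hρ1 : ρ < 1 := by
    apply ENNReal.rpow_lt_one_of_one_lt_of_neg (by norm_num)
    have := mul_pos hn' (sub_pos.2 h1)
    linarith
  have hC0 : (1 - ρ)⁻¹ ≠ 0 := by
    simp only [ne_eq, ENNReal.inv_eq_zero]
    exact ne_top_of_le_ne_top ENNReal.one_ne_top tsub_le_self
  refine ⟨(1 - ρ)⁻¹, hC0, ?_, ?_⟩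
  · simp only [ne_eq, ENNReal.inv_eq_top]
    exact (tsub_pos_of_lt hρ1).ne'
  intro V N hN hV
  rcases eq_or_ne V ∞ with rfl | hVt
  · rw [ENNReal.mul_top hC0]
    exact le_top
  have hzero : ∀ j : ℕ, ¬ (2 : ℝ≥0∞) ^ (-((j : ℝ) * n)) ≤ V → N j = 0 := by
    intro j hj
    refine (hN j).resolve_right fun h => hj ?_
    calc (2 : ℝ≥0∞) ^ (-((j : ℝ) * n)) = 2 ^ (-((j : ℝ) * n)) * 1 := (mul_one _).symm
      _ ≤ 2 ^ (-((j : ℝ) * n)) * N j := by gcongr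
      _ ≤ V := hV j
  by_cases hex : ∃ j : ℕ, (2 : ℝ≥0∞) ^ (-((j : ℝ) * n)) ≤ V
  swap
  · push Not at hex
    have : ∀ j, N j = 0 := fun j => hzero j (not_le.2 (hex j))
    simp [this, phi]
  classical
  set J := Nat.find hex with hJ
  have hJV : (2 : ℝ≥0∞) ^ (-((J : ℝ) * n)) ≤ V := Nat.find_spec hex
  have hV0 : V ≠ 0 := fun h => two_rpow_ne_zero _ (le_zero_iff.1 (h ▸ hJV))
  have hsmall : ∀ j ∈ Finset.range J,
      (2 : ℝ≥0∞) ^ (-((j : ℝ) * n)) * phi θ (N j) = 0 := by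
    intro j hj
    rw [hzero j (Nat.find_min hex (Finset.mem_range.1 hj))]
    simp [phi]
  rw [← Summable.sum_add_tsum_nat_add' (k := J) ENNReal.summable, Finset.sum_eq_zero hsmall,
    zero_add, ← ENNReal.tsum_geometric, ← ENNReal.tsum_mul_right]
  refine ENNReal.tsum_le_tsum fun i => ?_
  have hphi : phi θ (N (i + J)) ≤ N (i + J) ^ θ := by
    unfold phi
    split_ifs <;> simp
  have hNle : N (i + J) ≤ (2 : ℝ≥0∞) ^ (((i + J : ℕ) : ℝ) * n) * V := by
    calc N (i + J) = (2 : ℝ≥0∞) ^ (((i + J : ℕ) : ℝ) * n) *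
          ((2 : ℝ≥0∞) ^ (-(((i + J : ℕ) : ℝ) * n)) * N (i + J)) := by
          rw [← mul_assoc, ← two_rpow_add, add_neg_cancel, ENNReal.rpow_zero, one_mul]
      _ ≤ _ := by gcongr; exact hV _
  calc (2 : ℝ≥0∞) ^ (-(((i + J : ℕ) : ℝ) * n)) * phi θ (N (i + J))
      ≤ (2 : ℝ≥0∞) ^ (-(((i + J : ℕ) : ℝ) * n)) *
          ((2 : ℝ≥0∞) ^ (((i + J : ℕ) : ℝ) * n) * V) ^ θ := by
        gcongr
        exact hphi.trans (by gcongr)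
    _ = ρ ^ i * (((2 : ℝ≥0∞) ^ (-((J : ℝ) * n))) ^ (1 - θ) * V ^ θ) := by
        rw [ENNReal.mul_rpow_of_nonneg _ _ h0, ← mul_assoc, ← mul_assoc, hρ,
          ← ENNReal.rpow_natCast, ← ENNReal.rpow_mul, ← ENNReal.rpow_mul, ← ENNReal.rpow_mul,
          ← two_rpow_add, ← two_rpow_add]
        congr 2
        push_cast
        ring
    _ ≤ ρ ^ i * (V ^ (1 - θ) * V ^ θ) := by
        gcongr
    _ = ρ ^ i * V := by
        rw [← ENNReal.rpow_add _ _ hV0 hVt, sub_add_cancel, ENNReal.rpow_one]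

/-! ### Dyadic cubes -/

/-- The index `m` of the unique cube `Q_{j,m}` containing `x`. -/
def idx (n j : ℕ) (x : EuclideanSpace ℝ (Fin n)) : Fin n → ℤ :=
  fun i => ⌊(2 : ℝ) ^ (j : ℝ) * x i + 1 / 2⌋

lemma mem_Qcube_iff {n j : ℕ} {m : Fin n → ℤ} {x : EuclideanSpace ℝ (Fin n)} :
    x ∈ Qcube n j m ↔ m = idx n j x := by
  have h2 : (0 : ℝ) < (2 : ℝ) ^ (j : ℝ) := by positivity
  rw [eq_comm, funext_iff]
  refine forall_congr' fun i => ?_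
  rw [idx, Int.floor_eq_iff, Real.rpow_neg (by norm_num), inv_mul_le_iff₀ h2, lt_inv_mul_iff₀ h2]
  constructor <;> rintro ⟨h, h'⟩ <;> constructor <;> linarith

lemma tsum_mul_indicator (n j : ℕ) (h : (Fin n → ℤ) → ℝ≥0∞) (x : EuclideanSpace ℝ (Fin n)) :
    ∑' m, h m * (Qcube n j m).indicator (fun _ => (1 : ℝ≥0∞)) x = h (idx n j x) := by
  rw [tsum_eq_single (idx n j x)]
  · rw [Set.indicator_of_mem (mem_Qcube_iff.2 rfl), mul_one]
  · intro m hm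
    rw [Set.indicator_of_notMem (fun hx => hm (mem_Qcube_iff.1 hx)), mul_zero]

lemma Qcube_eq (n j : ℕ) (m : Fin n → ℤ) :
    Qcube n j m = WithLp.ofLp ⁻¹' (Set.univ.pi fun i =>
      Set.Ico ((2 : ℝ) ^ (-(j : ℝ)) * ((m i : ℝ) - 1 / 2))
        ((2 : ℝ) ^ (-(j : ℝ)) * ((m i : ℝ) + 1 / 2))) := by
  ext x
  simp [Qcube]

lemma measurableSet_box (n j : ℕ) (m : Fin n → ℤ) :
    MeasurableSet (Set.univ.pi fun i =>
      Set.Ico ((2 : ℝ) ^ (-(j : ℝ)) * ((m i : ℝ) - 1 / 2))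
        ((2 : ℝ) ^ (-(j : ℝ)) * ((m i : ℝ) + 1 / 2))) :=
  MeasurableSet.univ_pi fun _ => measurableSet_Ico

lemma measurableSet_Qcube (n j : ℕ) (m : Fin n → ℤ) : MeasurableSet (Qcube n j m) := by
  rw [Qcube_eq]
  exact (PiLp.volume_preserving_ofLp (Fin n)).measurable (measurableSet_box n j m)

lemma volume_Qcube (n j : ℕ) (m : Fin n → ℤ) :
    volume (Qcube n j m) = (2 : ℝ≥0∞) ^ (-((j : ℝ) * n)) := by
  rw [Qcube_eq, (PiLp.volume_preserving_ofLp (Fin n)).measure_preimage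
    (measurableSet_box n j m).nullMeasurableSet, Real.volume_pi_Ico]
  have : ∀ i, (2 : ℝ) ^ (-(j : ℝ)) * ((m i : ℝ) + 1 / 2) -
      (2 : ℝ) ^ (-(j : ℝ)) * ((m i : ℝ) - 1 / 2) = (2 : ℝ) ^ (-(j : ℝ)) := fun i => by ring
  simp only [this, Finset.prod_const, Finset.card_univ, Fintype.card_fin]
  rw [← ENNReal.ofReal_rpow_of_pos (by norm_num), ← ENNReal.rpow_natCast, ← ENNReal.rpow_mul]
  simp

lemma measurable_idx (n j : ℕ) : Measurable (idx n j) := by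
  refine measurable_to_countable' fun m => ?_
  convert measurableSet_Qcube n j m using 1
  ext x
  rw [mem_Qcube_iff, eq_comm]
  rfl

lemma lintegral_idx (n j : ℕ) (h : (Fin n → ℤ) → ℝ≥0∞) :
    ∫⁻ x, h (idx n j x) = (2 : ℝ≥0∞) ^ (-((j : ℝ) * n)) * ∑' m, h m := by
  simp_rw [← tsum_mul_indicator n j h]
  rw [lintegral_tsum fun m => ((measurable_const.indicator
    (measurableSet_Qcube n j m)).const_mul _).aemeasurable, ← ENNReal.tsum_mul_left]
  refine tsum_congr fun m => ?_
  rw [lintegral_const_mul _ (measurable_const.indicator (measurableSet_Qcube n j m)),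
    lintegral_indicator_const (measurableSet_Qcube n j m), volume_Qcube, one_mul, mul_comm]

/-! ### The `L_p` norm on one scale -/

/-- The number of entries of `A` exceeding `2 ^ k`. -/
def levelCount {M : Type*} (A : M → ℝ≥0∞) (k : ℤ) : ℝ≥0∞ :=
  ∑' m, if (2 : ℝ≥0∞) ^ (k : ℝ) < A m then 1 else 0

lemma one_le_levelCount {M : Type*} {A : M → ℝ≥0∞} {k : ℤ} {m : M}
    (h : (2 : ℝ≥0∞) ^ (k : ℝ) < A m) : 1 ≤ levelCount A k := by
  refine le_trans ?_ (ENNReal.le_tsum m)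
  rw [if_pos h]

lemma levelCount_zero_or {M : Type*} (A : M → ℝ≥0∞) (k : ℤ) :
    levelCount A k = 0 ∨ 1 ≤ levelCount A k := by
  by_cases h : ∃ m, (2 : ℝ≥0∞) ^ (k : ℝ) < A m
  · obtain ⟨m, hm⟩ := h
    exact Or.inr (one_le_levelCount hm)
  · push Not at h
    left
    exact ENNReal.tsum_eq_zero.2 fun m => if_neg (not_lt.2 (h m))

lemma exists_dyadic {y : ℝ≥0∞} (h0 : y ≠ 0) (ht : y ≠ ∞) :
    ∃ k : ℤ, (2 : ℝ≥0∞) ^ (k : ℝ) < y ∧ y ≤ (2 : ℝ≥0∞) ^ ((k : ℝ) + 1) := by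
  obtain ⟨K, hK1, hK2⟩ := ENNReal.exists_mem_Ioc_zpow h0 ht (y := 2) (by norm_num) (by norm_num)
  rw [← ENNReal.rpow_intCast] at hK1 hK2
  exact ⟨K, hK1, by exact_mod_cast hK2⟩

/-- The case `r = ∞` of the layer-cake bound for `ℓ_r` norms. -/
lemma le_tsum_phi_zero {M : Type*} (A : M → ℝ≥0∞) (hA : ∀ m, A m ≠ ∞) (m : M) :
    A m ≤ ∑' k : ℤ, (2 : ℝ≥0∞) ^ ((k : ℝ) + 1) * phi 0 (levelCount A k) := by
  rcases eq_or_ne (A m) 0 with h0 | h0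
  · simp [h0]
  obtain ⟨k, hk1, hk2⟩ := exists_dyadic h0 (hA m)
  refine le_trans ?_ (ENNReal.le_tsum k)
  have h1 := one_le_levelCount hk1
  rw [phi, if_neg (zero_lt_one.trans_le h1).ne', ENNReal.rpow_zero, mul_one]
  exact hk2

/-- The layer-cake bound for the `ℓ_r` norm, `r = 1 / θ`. -/
lemma rpow_tsum_le_tsum_phi {M : Type*} {θ : ℝ} (h0 : 0 < θ) (h1 : θ ≤ 1) (A : M → ℝ≥0∞)
    (hA : ∀ m, A m ≠ ∞) :
    (∑' m, A m ^ θ⁻¹) ^ θ ≤ ∑' k : ℤ, (2 : ℝ≥0∞) ^ ((k : ℝ) + 1) * phi θ (levelCount A k) := by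
  have hpt : ∀ m, A m ^ θ⁻¹ ≤ ∑' k : ℤ, ((2 : ℝ≥0∞) ^ ((k : ℝ) + 1)) ^ θ⁻¹ *
      (if (2 : ℝ≥0∞) ^ (k : ℝ) < A m then 1 else 0) := by
    intro m
    rcases eq_or_ne (A m) 0 with hz | hz
    · rw [hz, ENNReal.zero_rpow_of_pos (inv_pos.2 h0)]
      exact zero_le
    obtain ⟨k, hk1, hk2⟩ := exists_dyadic hz (hA m)
    refine le_trans ?_ (ENNReal.le_tsum k)
    rw [if_pos hk1, mul_one]
    exact ENNReal.rpow_le_rpow hk2 (inv_pos.2 h0).le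
  calc (∑' m, A m ^ θ⁻¹) ^ θ
      ≤ (∑' k : ℤ, ((2 : ℝ≥0∞) ^ ((k : ℝ) + 1)) ^ θ⁻¹ * levelCount A k) ^ θ := by
        refine ENNReal.rpow_le_rpow ((ENNReal.tsum_le_tsum hpt).trans_eq ?_) h0.le
        rw [ENNReal.tsum_comm]
        simp_rw [ENNReal.tsum_mul_left]
        rfl
    _ ≤ ∑' k : ℤ, (((2 : ℝ≥0∞) ^ ((k : ℝ) + 1)) ^ θ⁻¹ * levelCount A k) ^ θ :=
        tsum_rpow_le h0 h1 _
    _ = _ := by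
        refine tsum_congr fun k => ?_
        rw [ENNReal.mul_rpow_of_nonneg _ _ h0.le, ENNReal.rpow_inv_rpow h0.ne', phi]
        split_ifs with h
        · rw [h, ENNReal.zero_rpow_of_pos h0]
        · rfl

/-- The bound for the `L_{p₁}` norm of a step function on the scale `j`. For `p₁ = ∞` the
exponent `p₀ / p₁.toReal` is `p₀ / 0 = 0`, which is the intended value. -/
lemma lpNormE_idx_le (n j : ℕ) {p₀ p₁ : ℝ≥0∞} (hp₀ : 0 < p₀) (hp : p₀ < p₁)
    (a : (Fin n → ℤ) → ℝ≥0∞) (ha : ∀ m, a m ≠ ∞) :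
    lpNormE volume p₁ (fun x => a (idx n j x)) ^ p₀.toReal ≤
      (2 : ℝ≥0∞) ^ (-((j : ℝ) * n * (p₀.toReal / p₁.toReal))) *
        ∑' k : ℤ, (2 : ℝ≥0∞) ^ ((k : ℝ) + 1) *
          phi (p₀.toReal / p₁.toReal) (levelCount (fun m => a m ^ p₀.toReal) k) := by
  have hp₀r : 0 < p₀.toReal := ENNReal.toReal_pos hp₀.ne' hp.ne_top
  have hA : ∀ m, a m ^ p₀.toReal ≠ ∞ := fun m => ENNReal.rpow_ne_top_of_nonneg hp₀r.le (ha m)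
  unfold lpNormE
  split_ifs with h
  · subst h
    simp only [ENNReal.toReal_top, _root_.div_zero, mul_zero, neg_zero, ENNReal.rpow_zero, one_mul]
    rw [← ENNReal.le_rpow_inv_iff hp₀r]
    refine essSup_le_of_ae_le _ (Filter.Eventually.of_forall fun x => ?_)
    simp only
    rw [ENNReal.le_rpow_inv_iff hp₀r]
    exact le_tsum_phi_zero _ hA (idx n j x)
  · have hlt : p₀.toReal < p₁.toReal := (ENNReal.toReal_lt_toReal hp.ne_top h).2 hp
    have hp₁r : 0 < p₁.toReal := hp₀r.trans hlt
    have hθ : 0 < p₀.toReal / p₁.toReal := div_pos hp₀r hp₁r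
    rw [lintegral_idx n j fun m => a m ^ p₁.toReal, ← ENNReal.rpow_mul, one_div_mul_eq_div,
      ENNReal.mul_rpow_of_nonneg _ _ hθ.le, ← ENNReal.rpow_mul, neg_mul]
    refine mul_le_mul' le_rfl (le_trans (le_of_eq ?_)
      (rpow_tsum_le_tsum_phi hθ ((div_le_one hp₁r).2 hlt.le) (fun m => a m ^ p₀.toReal) hA))
    congr 2
    ext m
    rw [← ENNReal.rpow_mul]
    congr 1
    field_simp

lemma lpNormE_const_mul {α : Type*} [MeasurableSpace α] (μ : Measure α) {p : ℝ≥0∞} (hp : 0 < p)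
    {c : ℝ≥0∞} (hc : c ≠ ∞) (f : α → ℝ≥0∞) :
    lpNormE μ p (fun x => c * f x) = c * lpNormE μ p f := by
  unfold lpNormE
  split_ifs with h
  · exact ENNReal.essSup_const_mul
  · have hpr : 0 < p.toReal := ENNReal.toReal_pos hp.ne' h
    simp_rw [ENNReal.mul_rpow_of_nonneg _ _ hpr.le]
    rw [lintegral_const_mul' _ _ (ENNReal.rpow_ne_top_of_nonneg hpr.le hc),
      ENNReal.mul_rpow_of_nonneg _ _ (by positivity), ← ENNReal.rpow_mul,
      mul_one_div_cancel hpr.ne', ENNReal.rpow_one]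

lemma le_ellqNorm {ι : Type*} {q : ℝ≥0∞} (hq : 0 < q) (a : ι → ℝ≥0∞) (i : ι) :
    a i ≤ ellqNorm q a := by
  unfold ellqNorm
  split_ifs with h
  · exact le_iSup a i
  · have hqr : 0 < q.toReal := ENNReal.toReal_pos hq.ne' h
    rw [one_div, ENNReal.le_rpow_inv_iff hqr]
    exact ENNReal.le_tsum (f := fun i => a i ^ q.toReal) i

lemma tsum_two_pow_mul_volume_le {α : Type*} [MeasurableSpace α] (μ : Measure α)
    {G : α → ℝ≥0∞} (hG : Measurable G) :
    ∑' k : ℤ, (2 : ℝ≥0∞) ^ (k : ℝ) * μ {x | (2 : ℝ≥0∞) ^ (k : ℝ) < G x} ≤ 2 * ∫⁻ x, G x ∂μ := by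
  have hm : ∀ k : ℤ, MeasurableSet {x | (2 : ℝ≥0∞) ^ (k : ℝ) < G x} := fun k =>
    measurableSet_lt measurable_const hG
  calc ∑' k : ℤ, (2 : ℝ≥0∞) ^ (k : ℝ) * μ {x | (2 : ℝ≥0∞) ^ (k : ℝ) < G x}
      = ∑' k : ℤ, ∫⁻ x, {x | (2 : ℝ≥0∞) ^ (k : ℝ) < G x}.indicator
          (fun _ => (2 : ℝ≥0∞) ^ (k : ℝ)) x ∂μ :=
        tsum_congr fun k => (lintegral_indicator_const (hm k) _).symm
    _ = ∫⁻ x, ∑' k : ℤ, {x | (2 : ℝ≥0∞) ^ (k : ℝ) < G x}.indicator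
          (fun _ => (2 : ℝ≥0∞) ^ (k : ℝ)) x ∂μ :=
        (lintegral_tsum fun k => (measurable_const.indicator (hm k)).aemeasurable).symm
    _ ≤ ∫⁻ x, 2 * G x ∂μ := by
        refine lintegral_mono fun x => le_trans (le_of_eq ?_) (tsum_two_pow_le (G x))
        refine tsum_congr fun k => ?_
        simp [Set.indicator_apply]
    _ = 2 * ∫⁻ x, G x ∂μ := lintegral_const_mul _ hG

/-! ### The embedding -/

/-- The case `q = ∞` of the embedding, for the `p₀`-th powers and with the supremum over all
cubes containing `x` written as a supremum over the scales. -/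
lemma tsum_scales_le (n : ℕ) (hn : 0 < n) {p₀ p₁ : ℝ≥0∞} (hp₀ : 0 < p₀) (hp : p₀ < p₁) :
    ∃ C : ℝ≥0∞, C ≠ 0 ∧ C ≠ ∞ ∧ ∀ b : ℕ → (Fin n → ℤ) → ℝ≥0∞, (∀ j m, b j m ≠ ∞) →
      ∑' j : ℕ, (2 : ℝ≥0∞) ^ (-((j : ℝ) * n * (1 - p₀.toReal / p₁.toReal))) *
          lpNormE volume p₁ (fun x => b j (idx n j x)) ^ p₀.toReal ≤
        C * ∫⁻ x, ⨆ j, b j (idx n j x) ^ p₀.toReal := by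
  have hp₀r : 0 < p₀.toReal := ENNReal.toReal_pos hp₀.ne' hp.ne_top
  set θ := p₀.toReal / p₁.toReal with hθ
  have hθ0 : 0 ≤ θ := by positivity
  have hθ1 : θ < 1 := by
    by_cases h : p₁ = ∞
    · simp [hθ, h]
    · have hlt : p₀.toReal < p₁.toReal := (ENNReal.toReal_lt_toReal hp.ne_top h).2 hp
      exact (div_lt_one (hp₀r.trans hlt)).2 hlt
  obtain ⟨C, hC0, hCt, hC⟩ := geometric_scales n hn hθ0 hθ1
  refine ⟨4 * C, by simp [hC0], ENNReal.mul_ne_top (by simp) hCt, fun b hb => ?_⟩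
  set G : EuclideanSpace ℝ (Fin n) → ℝ≥0∞ := fun x => ⨆ j, b j (idx n j x) ^ p₀.toReal with hG
  have hGm : Measurable G := Measurable.iSup fun j =>
    (Measurable.of_discrete (f := fun m => b j m ^ p₀.toReal)).comp (measurable_idx n j)
  set N : ℤ → ℕ → ℝ≥0∞ := fun k j => levelCount (fun m => b j m ^ p₀.toReal) k with hN
  have hNV : ∀ (k : ℤ) (j : ℕ), (2 : ℝ≥0∞) ^ (-((j : ℝ) * n)) * N k j ≤
      volume {x | (2 : ℝ≥0∞) ^ (k : ℝ) < G x} := by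
    intro k j
    rw [hN]
    simp only [levelCount]
    rw [← lintegral_idx, ← lintegral_indicator_one (measurableSet_lt measurable_const hGm)]
    refine lintegral_mono fun x => ?_
    simp only
    split_ifs with h
    · rw [Set.indicator_of_mem]
      · simp
      · exact h.trans_le (le_iSup (fun j => b j (idx n j x) ^ p₀.toReal) j)
    · exact zero_le
  calc ∑' j : ℕ, (2 : ℝ≥0∞) ^ (-((j : ℝ) * n * (1 - θ))) *
          lpNormE volume p₁ (fun x => b j (idx n j x)) ^ p₀.toReal
      ≤ ∑' j : ℕ, ∑' k : ℤ, (2 : ℝ≥0∞) ^ ((k : ℝ) + 1) *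
          ((2 : ℝ≥0∞) ^ (-((j : ℝ) * n)) * phi θ (N k j)) := by
        refine ENNReal.tsum_le_tsum fun j => ?_
        refine (mul_le_mul_right (lpNormE_idx_le n j hp₀ hp (b j) (hb j)) _).trans_eq ?_
        rw [← mul_assoc, ← two_rpow_add, ← ENNReal.tsum_mul_left]
        refine tsum_congr fun k => ?_
        rw [mul_left_comm]
        congr 3
        rw [← hθ]
        ring
    _ = ∑' k : ℤ, (2 : ℝ≥0∞) ^ ((k : ℝ) + 1) *
          ∑' j : ℕ, (2 : ℝ≥0∞) ^ (-((j : ℝ) * n)) * phi θ (N k j) := by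
        rw [ENNReal.tsum_comm]
        simp_rw [ENNReal.tsum_mul_left]
    _ ≤ ∑' k : ℤ, (2 : ℝ≥0∞) ^ ((k : ℝ) + 1) *
          (C * volume {x | (2 : ℝ≥0∞) ^ (k : ℝ) < G x}) := by
        gcongr with k
        exact hC _ _ (fun j => levelCount_zero_or _ _) (hNV k)
    _ = 2 * C * ∑' k : ℤ, (2 : ℝ≥0∞) ^ (k : ℝ) *
          volume {x | (2 : ℝ≥0∞) ^ (k : ℝ) < G x} := by
        rw [← ENNReal.tsum_mul_left]
        refine tsum_congr fun k => ?_
        rw [two_rpow_add, ENNReal.rpow_one]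
        ring
    _ ≤ 2 * C * (2 * ∫⁻ x, G x) := by
        gcongr
        exact tsum_two_pow_mul_volume_le _ hGm
    _ = 4 * C * ∫⁻ x, G x := by ring

/-- **Jawerth embedding, constant exponents, sequence-space version.**
If `s₁ < s₀`, `0 < p₀ < p₁ ≤ ∞`, `0 < q ≤ ∞` and `s₀ - n/p₀ = s₁ - n/p₁`, then
`f^{s₀}_{p₀,q}(ℝⁿ) ↪ b^{s₁}_{p₁,p₀}(ℝⁿ)`. -/
theorem jawerth_embedding_constant_exponents (n : ℕ) (hn : 0 < n)
    (s₀ s₁ : ℝ) (p₀ p₁ q : ℝ≥0∞)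
    (hs : s₁ < s₀) (hp₀ : 0 < p₀) (hp₀p₁ : p₀ < p₁) (hq : 0 < q)
    (hsobolev : s₀ - n * (p₀⁻¹).toReal = s₁ - n * (p₁⁻¹).toReal) :
    ∃ C : ℝ≥0, 0 < C ∧ ∀ γ : ℕ → (Fin n → ℤ) → ℂ,
      bSeqNorm n s₁ p₁ p₀ γ ≤ C * fSeqNorm n s₀ p₀ q γ := by
  have hp₀t : p₀ ≠ ∞ := hp₀p₁.ne_top
  have hp₀r : 0 < p₀.toReal := ENNReal.toReal_pos hp₀.ne' hp₀t
  have hp₁ : 0 < p₁ := hp₀.trans hp₀p₁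
  obtain ⟨C, hC0, hCt, hC⟩ := tsum_scales_le n hn hp₀ hp₀p₁
  have hDt : C ^ (1 / p₀.toReal) ≠ ∞ := ENNReal.rpow_ne_top_of_nonneg (by positivity) hCt
  refine ⟨(C ^ (1 / p₀.toReal)).toNNReal, ?_, fun γ => ?_⟩
  · exact ENNReal.toNNReal_pos (by simp [ENNReal.rpow_eq_zero_iff, hC0, hCt]) hDt
  rw [ENNReal.coe_toNNReal hDt]
  set b : ℕ → (Fin n → ℤ) → ℝ≥0∞ := fun j m => (2 : ℝ≥0∞) ^ ((j : ℝ) * s₀) * ‖γ j m‖₊ with hb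
  have hbt : ∀ j m, b j m ≠ ∞ := fun j m =>
    ENNReal.mul_ne_top (two_rpow_ne_top _) ENNReal.coe_ne_top
  -- By the relation between the exponents, the Besov weight left after normalizing by
  -- `2 ^ (j s₀)` is the one in `tsum_scales_le`.
  have hexp : ∀ j : ℕ, (j : ℝ) * (s₁ - s₀) * p₀.toReal =
      -((j : ℝ) * n * (1 - p₀.toReal / p₁.toReal)) := by
    intro j
    rw [ENNReal.toReal_inv, ENNReal.toReal_inv] at hsobolev
    have hd : s₁ - s₀ = n * (p₁.toReal)⁻¹ - n * (p₀.toReal)⁻¹ := by linarith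
    have hcancel : (p₀.toReal)⁻¹ * p₀.toReal = 1 := inv_mul_cancel₀ hp₀r.ne'
    rw [hd, div_eq_mul_inv]
    linear_combination (-(j : ℝ) * n) * hcancel
  have hB : bSeqNorm n s₁ p₁ p₀ γ = (∑' j : ℕ,
      (2 : ℝ≥0∞) ^ (-((j : ℝ) * n * (1 - p₀.toReal / p₁.toReal))) *
        lpNormE volume p₁ (fun x => b j (idx n j x)) ^ p₀.toReal) ^ (1 / p₀.toReal) := by
    unfold bSeqNorm ellqNorm
    rw [if_neg hp₀t]
    congr 2
    ext j
    simp_rw [tsum_mul_indicator n j fun m => (‖γ j m‖₊ : ℝ≥0∞)]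
    rw [hb, lpNormE_const_mul _ hp₁ (two_rpow_ne_top _), ENNReal.mul_rpow_of_nonneg _ _ hp₀r.le,
      ENNReal.mul_rpow_of_nonneg _ _ hp₀r.le, ← mul_assoc, ← hexp, ← ENNReal.rpow_mul,
      ← ENNReal.rpow_mul, ← two_rpow_add]
    congr 2
    ring
  have hF : (∫⁻ x, ⨆ j, b j (idx n j x) ^ p₀.toReal) ^ (1 / p₀.toReal) ≤
      fSeqNorm n s₀ p₀ q γ := by
    unfold fSeqNorm lpNormE
    rw [if_neg hp₀t]
    refine ENNReal.rpow_le_rpow (lintegral_mono fun x => iSup_le fun j => ?_) (by positivity)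
    refine ENNReal.rpow_le_rpow ?_ hp₀r.le
    refine le_trans (le_of_eq ?_) (le_ellqNorm hq _ (j, idx n j x))
    simp only
    rw [Set.indicator_of_mem (mem_Qcube_iff.2 rfl), mul_one]
  rw [hB]
  refine (ENNReal.rpow_le_rpow (hC b hbt) (by positivity)).trans ?_
  rw [ENNReal.mul_rpow_of_nonneg _ _ (by positivity)]
  gcongr

end
end

section
/- Discrete estimate II from the proof of the constant-exponent Franke embedding: Let n ∈ ℕ and 0 < q < p₁ < ∞. There exists a constant C > 0 such that for every sequence (a_j)_{j∈ℕ₀} of non-negative real numbers, ( Σ_{k=1}^∞ 2^{−kn} ( Σ_{j=0}^{k−1} a_j^q )^{p₁/q} )^{1/p₁} ≤ C ( Σ_{j=0}^∞ 2^{−jn} a_j^{p₁} )^{1/p₁}. -/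
/-!
Put `r = p₁ / q ≥ 1`, `t = 2 ^ (-n / r) < 1` and `c j = t ^ j * a j ^ q`. Since `2 ^ (-k n) = (t ^ k) ^ r`
and `t ^ k * ∑_{j ≤ k} a j ^ q = ∑_{j ≤ k} t ^ (k - j) * c j`, the `k`-th term on the left is at most
the `r`-th power of the `k`-th entry of the convolution of `c` with the geometric sequence `t ^ i`.
Young's inequality `ℓ¹ * ℓʳ ⊆ ℓʳ` (`tsum_geometric_conv_rpow_le`) then bounds the left-hand
sum by `(∑ t ^ i) ^ r * ∑ (c j) ^ r`, and `(c j) ^ r = 2 ^ (-j n) * a j ^ p₁`.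
Taking `p₁`-th roots gives the constant `(1 - t)⁻¹ ^ (r / p₁)`.
-/

open MeasureTheory ENNReal NNReal

/-- The sum of a Cauchy product is the product of the sums, unconditionally in `ℝ≥0∞`. -/
theorem tsum_sum_range_conv (f g : ℕ → ℝ≥0∞) :
    ∑' k, ∑ j ∈ Finset.range (k + 1), f (k - j) * g j = (∑' i, f i) * ∑' j, g j := by
  have h1 : ∀ k, ∑ j ∈ Finset.range (k + 1), f (k - j) * g j
      = ∑' x : Finset.HasAntidiagonal.antidiagonal k, g x.1.1 * f x.1.2 := fun k => by
    rw [Finset.tsum_subtype (Finset.HasAntidiagonal.antidiagonal k) (fun x => g x.1 * f x.2),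
      Finset.Nat.sum_antidiagonal_eq_sum_range_succ (fun i j => g i * f j)]
    exact Finset.sum_congr rfl fun _ _ => mul_comm _ _
  simp_rw [h1]
  rw [← ENNReal.tsum_sigma' (fun x : (Σ k : ℕ, Finset.HasAntidiagonal.antidiagonal k) => g x.2.1.1 * f x.2.1.2)]
  have h2 := Finset.HasAntidiagonal.sigmaAntidiagonalEquivProd.tsum_eq (fun x : ℕ × ℕ => g x.1 * f x.2)
  simp only [Finset.HasAntidiagonal.sigmaAntidiagonalEquivProd_apply] at h2
  rw [h2, ENNReal.tsum_prod']
  simp_rw [ENNReal.tsum_mul_left, ENNReal.tsum_mul_right]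
  exact mul_comm _ _

/-- Young's convolution inequality `‖f * c‖_r ≤ ‖f‖_1 ‖c‖_r` on `ℕ`, for the geometric
sequence `f i = t ^ i`. -/
theorem tsum_geometric_conv_rpow_le (t : ℝ≥0∞) (c : ℕ → ℝ≥0∞) {r : ℝ} (hr : 1 ≤ r) :
    ∑' k, (∑ j ∈ Finset.range (k + 1), t ^ (k - j) * c j) ^ r
      ≤ ((1 - t)⁻¹) ^ r * ∑' j, c j ^ r := by
  have hr0 : 0 < r := by linarith
  have key : ∀ k, (∑ j ∈ Finset.range (k + 1), t ^ (k - j) * c j) ^ r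
      ≤ ((1 - t)⁻¹) ^ (r - 1) * ∑ j ∈ Finset.range (k + 1), t ^ (k - j) * c j ^ r := fun k => by
    have hS : ∑ j ∈ Finset.range (k + 1), t ^ (k - j) ≤ (1 - t)⁻¹ := by
      have h := Finset.sum_range_reflect (fun i => t ^ i) (k + 1)
      simp only [Nat.add_sub_cancel] at h
      rw [h, ← ENNReal.tsum_geometric]
      exact ENNReal.sum_le_tsum _
    have h := ENNReal.rpow_le_rpow (ENNReal.inner_le_weight_mul_Lp_of_nonneg
      (Finset.range (k + 1)) hr (fun j => t ^ (k - j)) c) hr0.le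
    rw [ENNReal.mul_rpow_of_nonneg _ _ hr0.le, ← ENNReal.rpow_mul, ← ENNReal.rpow_mul,
      inv_mul_cancel₀ hr0.ne', ENNReal.rpow_one, sub_mul, inv_mul_cancel₀ hr0.ne', one_mul] at h
    refine h.trans ?_
    gcongr
  calc _ ≤ ∑' k, ((1 - t)⁻¹) ^ (r - 1) * ∑ j ∈ Finset.range (k + 1), t ^ (k - j) * c j ^ r :=
        ENNReal.tsum_le_tsum key
    _ = ((1 - t)⁻¹) ^ (r - 1) * ((1 - t)⁻¹) ^ (1 : ℝ) * ∑' j, c j ^ r := by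
        rw [ENNReal.tsum_mul_left, tsum_sum_range_conv (fun i => t ^ i) (fun j => c j ^ r),
          ENNReal.tsum_geometric, ENNReal.rpow_one, mul_assoc]
    _ = _ := by
        rw [← ENNReal.rpow_add_of_nonneg _ _ (by linarith) zero_le_one, sub_add_cancel]

/-- **Discrete estimate II** from the proof of the constant-exponent Franke embedding:
for `0 < q < p₁ < ∞` there is `C > 0` such that for all non-negative sequences `(a_j)`,
`(Σ_{k≥1} 2^{-kn}(Σ_{j=0}^{k-1} a_j^q)^{p₁/q})^{1/p₁} ≤ C (Σ_j 2^{-jn} a_j^{p₁})^{1/p₁}`. -/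
theorem franke_discrete_estimate_II (n : ℕ) (hn : 0 < n) (p₁ q : ℝ)
    (hq₀ : 0 < q) (hqp₁ : q < p₁) :
    ∃ C : ℝ≥0, 0 < C ∧ ∀ a : ℕ → ℝ≥0∞,
      (∑' k : ℕ, (2 : ℝ≥0∞) ^ (-(((k + 1 : ℕ) : ℝ) * n)) *
          (∑ j ∈ Finset.range (k + 1), a j ^ q) ^ (p₁ / q)) ^ (1 / p₁)
      ≤ C * (∑' j : ℕ, (2 : ℝ≥0∞) ^ (-((j : ℝ) * n)) * a j ^ p₁) ^ (1 / p₁) := by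
  have hp : 0 < p₁ := hq₀.trans hqp₁
  have hn' : (0 : ℝ) < n := Nat.cast_pos.mpr hn
  obtain ⟨r, hrdef⟩ : ∃ r, r = p₁ / q := ⟨_, rfl⟩
  have hr : 1 ≤ r := by rw [hrdef, one_le_div hq₀]; exact hqp₁.le
  have hr0 : 0 < r := by linarith
  obtain ⟨t, ht⟩ : ∃ t : ℝ≥0∞, t = 2 ^ (-(n / r)) := ⟨_, rfl⟩
  have ht1 : t < 1 := by
    rw [ht]
    exact ENNReal.rpow_lt_one_of_one_lt_of_neg (by norm_num) (neg_neg_of_pos (by positivity))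
  have hS0 : (1 - t)⁻¹ ≠ 0 := ENNReal.inv_ne_zero.mpr (by finiteness)
  have hSt : (1 - t)⁻¹ ≠ ∞ := ENNReal.inv_ne_top.mpr (tsub_pos_of_lt ht1).ne'
  have hC0 : 0 < ((1 - t)⁻¹ ^ r) ^ (1 / p₁) :=
    ENNReal.rpow_pos (ENNReal.rpow_pos hS0.bot_lt hSt) (by finiteness)
  have hCt : ((1 - t)⁻¹ ^ r) ^ (1 / p₁) ≠ ∞ :=
    ENNReal.rpow_ne_top_of_nonneg (by positivity) (ENNReal.rpow_ne_top_of_nonneg hr0.le hSt)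
  refine ⟨(((1 - t)⁻¹ ^ r) ^ (1 / p₁)).toNNReal, ENNReal.toNNReal_pos hC0.ne' hCt, fun a => ?_⟩
  rw [ENNReal.coe_toNNReal hCt, ← ENNReal.mul_rpow_of_nonneg _ _ (by positivity), ← hrdef]
  refine ENNReal.rpow_le_rpow ?_ (by positivity)
  have htk : ∀ k : ℕ, (t ^ k) ^ r = (2 : ℝ≥0∞) ^ (-((k : ℝ) * n)) := fun k => by
    rw [ht, ← ENNReal.rpow_natCast, ← ENNReal.rpow_mul, ← ENNReal.rpow_mul]
    congr 1
    field_simp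
  have hc : ∀ j : ℕ, (2 : ℝ≥0∞) ^ (-((j : ℝ) * n)) * a j ^ p₁ = (t ^ j * a j ^ q) ^ r := fun j => by
    rw [ENNReal.mul_rpow_of_nonneg _ _ hr0.le, htk, ← ENNReal.rpow_mul, hrdef,
      mul_div_cancel₀ _ hq₀.ne']
  simp_rw [hc]
  refine le_trans (ENNReal.tsum_le_tsum fun k => ?_) (tsum_geometric_conv_rpow_le t _ hr)
  have hconv : ∑ j ∈ Finset.range (k + 1), t ^ (k - j) * (t ^ j * a j ^ q)
      = t ^ k * ∑ j ∈ Finset.range (k + 1), a j ^ q := by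
    rw [Finset.mul_sum]
    refine Finset.sum_congr rfl fun j hj => ?_
    rw [← mul_assoc, ← pow_add, Nat.sub_add_cancel (Finset.mem_range_succ_iff.mp hj)]
  rw [hconv, ENNReal.mul_rpow_of_nonneg _ _ hr0.le, htk]
  gcongr
  · norm_num
  · exact Nat.le_succ k
end

section
/- Discrete estimate III from the proof of the constant-exponent Franke embedding: Let n ∈ ℕ, 0 < p₀ < p₁ < ∞ and 0 < q ≤ min(1, p₀). There exists a constant C > 0 such that for every family (b_{j,l})_{j,l∈ℕ₀} of non-negative real numbers, Σ_{k=1}^∞ 2^{−kn} ( Σ_{j=k}^∞ b_{j,j−k}^q )^{p₁/q} ≤ C Σ_{j=1}^∞ 2^{−jn} ( Σ_{l=0}^{j−1} 2^{ln} b_{j,l}^{p₀} )^{p₁/p₀}. -/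
/-!
Set `a k l = b (l + (k + 1)) l` and `δ = n (p₁/p₀ - 1) > 0`. Both sides are compared with the double
sum `∑ₖ ∑ₗ 2 ^ (-(k+1)n) 2 ^ (lδ) (a k l) ^ p₁`.

* Since `p₁/p₀ ≥ 1`, the map `t ↦ t ^ (p₁/p₀)` is superadditive (`sum_rpow_le_rpow_sum`), so moving
  the power inside the finite sum on the right-hand side decreases it. Summing over `l ≤ j` first
  and reindexing by `j = k + l` (`tsum_sum_range_succ`) gives exactly this double sum.
* For fixed `k`, the weight `2 ^ (lδ)` grows geometrically, so an `ℓ¹` sum is controlled by a weighted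
  `ℓ ^ r` sum (`tsum_rpow_le_weighted`), applied with `x l = (a k l) ^ q` and `r = p₁/q`.
-/

open MeasureTheory ENNReal NNReal

/-- Superadditivity of `t ↦ t ^ r` for `r ≥ 1`, over a finite sum. -/
theorem sum_rpow_le_rpow_sum {ι : Type*} (s : Finset ι) (f : ι → ℝ≥0∞) {r : ℝ} (hr : 1 ≤ r) :
    ∑ i ∈ s, f i ^ r ≤ (∑ i ∈ s, f i) ^ r := by
  classical
  induction s using Finset.induction_on with
  | empty => simp
  | insert a s ha ih =>
    rw [Finset.sum_insert ha, Finset.sum_insert ha]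
    exact (add_le_add le_rfl ih).trans (ENNReal.add_rpow_le_rpow_add _ _ hr)

/-- Summation over the triangle `l ≤ j`, reindexed by `j = k + l`. -/
theorem tsum_sum_range_succ (f : ℕ → ℕ → ℝ≥0∞) :
    ∑' j : ℕ, ∑ l ∈ Finset.range (j + 1), f j l = ∑' k : ℕ, ∑' l : ℕ, f (l + k) l := by
  have h1 : ∀ j : ℕ, ∑ l ∈ Finset.range (j + 1), f j l
      = ∑' p : Finset.HasAntidiagonal.antidiagonal j, f (p.1.1 + p.1.2) p.1.1 := by
    intro j
    rw [Finset.tsum_subtype (Finset.HasAntidiagonal.antidiagonal j) (fun p : ℕ × ℕ => f (p.1 + p.2) p.1),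
      Finset.Nat.sum_antidiagonal_eq_sum_range_succ (fun a c => f (a + c) a)]
    refine Finset.sum_congr rfl fun l hl => ?_
    rw [Nat.add_sub_cancel' (by simpa [Nat.lt_succ_iff] using hl)]
  simp_rw [h1]
  rw [← ENNReal.tsum_sigma' (fun x : Σ j : ℕ, Finset.HasAntidiagonal.antidiagonal j =>
      f (x.2.1.1 + x.2.1.2) x.2.1.1), ENNReal.tsum_comm, ← ENNReal.tsum_prod]
  exact Finset.HasAntidiagonal.sigmaAntidiagonalEquivProd.tsum_eq (fun p : ℕ × ℕ => f (p.1 + p.2) p.1)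

/-- A geometrically weighted `ℓ ^ r` sum controls the `ℓ¹` sum: with `S` the weighted sum, each term
satisfies `x l ≤ 2 ^ (-lδ/r) * S ^ (1/r)`, and these bounds form a geometric series. The
constant is finite exactly when `δ > 0`. -/
theorem tsum_rpow_le_weighted {δ r : ℝ} (hr : 0 < r) (x : ℕ → ℝ≥0∞) :
    (∑' l, x l) ^ r ≤ ((1 - (2 : ℝ≥0∞) ^ (-(δ / r)))⁻¹) ^ r *
      ∑' l : ℕ, (2 : ℝ≥0∞) ^ ((l : ℝ) * δ) * x l ^ r := by
  set S := ∑' l : ℕ, (2 : ℝ≥0∞) ^ ((l : ℝ) * δ) * x l ^ r with hS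
  have hx : ∀ l : ℕ, x l ≤ ((2 : ℝ≥0∞) ^ (-(δ / r))) ^ l * S ^ (1 / r) := by
    intro l
    have h1 : (2 : ℝ≥0∞) ^ ((l : ℝ) * δ) * x l ^ r ≤ S := ENNReal.le_tsum l
    have h2 : x l ^ r ≤ (2 : ℝ≥0∞) ^ (-((l : ℝ) * δ)) * S := by
      calc x l ^ r = (2 : ℝ≥0∞) ^ (-((l : ℝ) * δ)) * ((2 : ℝ≥0∞) ^ ((l : ℝ) * δ) * x l ^ r) := by
            rw [← mul_assoc, ← ENNReal.rpow_add _ _ two_ne_zero ofNat_ne_top]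
            simp
        _ ≤ _ := by gcongr
    calc x l = (x l ^ r) ^ (1 / r) := by
          rw [← ENNReal.rpow_mul, mul_one_div_cancel hr.ne', ENNReal.rpow_one]
      _ ≤ ((2 : ℝ≥0∞) ^ (-((l : ℝ) * δ)) * S) ^ (1 / r) := by gcongr
      _ = _ := by
          rw [ENNReal.mul_rpow_of_nonneg _ _ (by positivity), ← ENNReal.rpow_mul,
            ← ENNReal.rpow_natCast, ← ENNReal.rpow_mul]
          congr 2
          ring
  have h : ∑' l, x l ≤ (1 - (2 : ℝ≥0∞) ^ (-(δ / r)))⁻¹ * S ^ (1 / r) :=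
    (ENNReal.tsum_le_tsum hx).trans_eq (by rw [ENNReal.tsum_mul_right, ENNReal.tsum_geometric])
  calc (∑' l, x l) ^ r ≤ ((1 - (2 : ℝ≥0∞) ^ (-(δ / r)))⁻¹ * S ^ (1 / r)) ^ r := by gcongr
    _ = _ := by
      rw [ENNReal.mul_rpow_of_nonneg _ _ hr.le, ← ENNReal.rpow_mul, one_div_mul_cancel hr.ne',
        ENNReal.rpow_one]

/-- **Discrete estimate III** from the proof of the constant-exponent Franke embedding:
for `0 < p₀ < p₁ < ∞` and `0 < q ≤ min(1,p₀)` there is `C > 0` such that for all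
non-negative families `(b_{j,l})`,
`Σ_{k≥1} 2^{-kn}(Σ_{j≥k} b_{j,j-k}^q)^{p₁/q} ≤ C Σ_{j≥1} 2^{-jn}(Σ_{l=0}^{j-1} 2^{ln} b_{j,l}^{p₀})^{p₁/p₀}`. -/
theorem franke_discrete_estimate_III (n : ℕ) (hn : 0 < n) (p₀ p₁ q : ℝ)
    (hp₀ : 0 < p₀) (hp₀p₁ : p₀ < p₁) (hq₀ : 0 < q) (hq : q ≤ min 1 p₀) :
    ∃ C : ℝ≥0, 0 < C ∧ ∀ b : ℕ → ℕ → ℝ≥0∞,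
      ∑' k : ℕ, (2 : ℝ≥0∞) ^ (-(((k + 1 : ℕ) : ℝ) * n)) *
          (∑' j : ℕ, b (j + (k + 1)) j ^ q) ^ (p₁ / q)
      ≤ C * ∑' j : ℕ, (2 : ℝ≥0∞) ^ (-(((j + 1 : ℕ) : ℝ) * n)) *
          (∑ l ∈ Finset.range (j + 1), (2 : ℝ≥0∞) ^ ((l : ℝ) * n) * b (j + 1) l ^ p₀)
            ^ (p₁ / p₀) := by
  have hqp : q < p₁ := (hq.trans (min_le_right _ _)).trans_lt hp₀p₁
  have hp₁ : 0 < p₁ := hp₀.trans hp₀p₁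
  have hr : 0 < p₁ / q := div_pos hp₁ hq₀
  have hs : 1 < p₁ / p₀ := (one_lt_div hp₀).2 hp₀p₁
  have hn' : (0 : ℝ) < n := by exact_mod_cast hn
  set δ : ℝ := n * (p₁ / p₀ - 1) with hδ
  have hδ0 : 0 < δ := mul_pos hn' (by linarith)
  set K : ℝ≥0∞ := ((1 - (2 : ℝ≥0∞) ^ (-(δ / (p₁ / q))))⁻¹) ^ (p₁ / q) with hK
  have hρ : (2 : ℝ≥0∞) ^ (-(δ / (p₁ / q))) < 1 :=
    ENNReal.rpow_lt_one_of_one_lt_of_neg (by norm_num) (by have := div_pos hδ0 hr; linarith)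
  have hKtop : K ≠ ∞ :=
    ENNReal.rpow_ne_top_of_nonneg hr.le (ENNReal.inv_ne_top.2 (tsub_pos_of_lt hρ).ne')
  have hK0 : 0 < K :=
    ENNReal.rpow_pos_of_nonneg
      (ENNReal.inv_pos.2 (ne_top_of_le_ne_top one_ne_top tsub_le_self)) hr.le
  refine ⟨K.toNNReal, ENNReal.toNNReal_pos hK0.ne' hKtop, fun b => ?_⟩
  rw [ENNReal.coe_toNNReal hKtop]
  calc ∑' k : ℕ, (2 : ℝ≥0∞) ^ (-(((k + 1 : ℕ) : ℝ) * n)) *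
          (∑' j : ℕ, b (j + (k + 1)) j ^ q) ^ (p₁ / q)
      ≤ ∑' k : ℕ, K * ∑' l : ℕ, (2 : ℝ≥0∞) ^ (-(((k + 1 : ℕ) : ℝ) * n)) *
          ((2 : ℝ≥0∞) ^ ((l : ℝ) * δ) * b (l + (k + 1)) l ^ p₁) := by
        refine ENNReal.tsum_le_tsum fun k => ?_
        rw [ENNReal.tsum_mul_left, mul_left_comm]
        gcongr
        refine (tsum_rpow_le_weighted (δ := δ) hr _).trans_eq ?_
        simp_rw [← ENNReal.rpow_mul, mul_div_cancel₀ _ hq₀.ne']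
        rfl
    _ = K * ∑' j : ℕ, ∑ l ∈ Finset.range (j + 1), (2 : ℝ≥0∞) ^ (-(((j + 1 : ℕ) : ℝ) * n)) *
          ((2 : ℝ≥0∞) ^ ((l : ℝ) * n) * b (j + 1) l ^ p₀) ^ (p₁ / p₀) := by
        rw [ENNReal.tsum_mul_left, tsum_sum_range_succ]
        congr 1
        refine tsum_congr fun k => tsum_congr fun l => ?_
        rw [ENNReal.mul_rpow_of_nonneg _ _ (by positivity), ← ENNReal.rpow_mul, ← ENNReal.rpow_mul,
          mul_div_cancel₀ _ hp₀.ne', add_assoc l k 1,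
          ← mul_assoc ((2 : ℝ≥0∞) ^ _), ← mul_assoc ((2 : ℝ≥0∞) ^ _),
          ← ENNReal.rpow_add _ _ two_ne_zero ofNat_ne_top,
          ← ENNReal.rpow_add _ _ two_ne_zero ofNat_ne_top]
        congr 2
        rw [hδ]
        push_cast
        ring
    _ ≤ _ := by
        gcongr with j
        rw [← Finset.mul_sum]
        gcongr
        exact sum_rpow_le_rpow_sum _ _ hs.le
end

section
/- Let n ∈ ℕ and let p : ℝⁿ → (0,∞) satisfy 0 < p⁻ := inf p ≤ sup p < ∞ with 1/p locally log-Hölder continuous. Then there exists a constant C ≥ 1 such that for all j ∈ ℕ₀, all m ∈ ℤⁿ, all x, y ∈ Q_{j,m} and every real number t with 1 ≤ t ≤ 2^{jn/p⁻}, one has t^{|p(x) − p(y)|} ≤ C. -/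
/-!
The bound follows by taking logarithms. Since `p` is bounded by `b`, the identity
`|p x - p y| = p x * p y * |1 / p x - 1 / p y|` transfers the log-Hölder modulus from `1 / p`
to `p`: with `L = log (e + 1 / |x - y|)`, one gets `|p x - p y| ≤ b² c / L`
(`abs_sub_le_of_abs_one_div_sub_le`). Points of a common cube of level `j` satisfy
`|x - y| ≤ n 2^{-j}`, so `j log 2 ≤ log n + L` (`level_mul_log_two_le`), and this is at most
`(1 + log n) L` because `L ≥ 1`. Hence
`log t * |p x - p y| ≤ (j n log 2 / p⁻) (b² c / L) ≤ (1 + log n) (n / p⁻) b² c`,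
independently of `j`, `m`, `x`, `y` and `t`. When `x = y` the left-hand side of the claim is `1`.
-/

open MeasureTheory ENNReal NNReal

noncomputable section

/-- A function `g : ℝⁿ → ℝ` is locally log-Hölder continuous if there exists `c > 0` such
that `|g(x) − g(y)| ≤ c / log(e + 1/|x−y|)` for all `x, y ∈ ℝⁿ` (Euclidean distance). -/
def LocLogHolder {n : ℕ} (g : EuclideanSpace ℝ (Fin n) → ℝ) : Prop :=
  ∃ c : ℝ, 0 < c ∧ ∀ x y, |g x - g y| ≤ c / Real.log (Real.exp 1 + 1 / dist x y)

/-- The diameter of a cube of side `2^{-j}` is at most `n 2^{-j}`; the sharp factor `√n` is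
not needed. -/
lemma dist_le_of_mem_Qcube {n j : ℕ} {m : Fin n → ℤ} {x y : EuclideanSpace ℝ (Fin n)}
    (hn : (1 : ℝ) ≤ n) (hx : x ∈ Qcube n j m) (hy : y ∈ Qcube n j m) :
    dist x y ≤ n * (2 : ℝ) ^ (-(j : ℝ)) := by
  set h : ℝ := (2 : ℝ) ^ (-(j : ℝ)) with hh
  have hh0 : 0 < h := by positivity
  rw [EuclideanSpace.dist_eq, Real.sqrt_le_left (by positivity)]
  have hcoord : ∀ i ∈ Finset.univ, dist (x i) (y i) ^ 2 ≤ h ^ 2 := by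
    intro i _
    have h1 := hx i
    have h2 := hy i
    rw [← hh] at h1 h2
    have : dist (x i) (y i) ≤ h := by
      rw [Real.dist_eq, abs_le]
      constructor <;> linarith [h1.1, h1.2, h2.1, h2.2]
    gcongr
  calc ∑ i, dist (x i) (y i) ^ 2 ≤ n * h ^ 2 := by
        simpa using Finset.sum_le_card_nsmul _ _ _ hcoord
    _ ≤ (n * h) ^ 2 := by
        rw [mul_pow]
        gcongr
        exact le_self_pow₀ hn two_ne_zero

/-- The dyadic level `j` is controlled by the logarithmic modulus at scale `|x - y|`. -/
lemma level_mul_log_two_le {n j : ℕ} {m : Fin n → ℤ} {x y : EuclideanSpace ℝ (Fin n)}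
    (hn : (1 : ℝ) ≤ n) (hx : x ∈ Qcube n j m) (hy : y ∈ Qcube n j m) (hd : 0 < dist x y) :
    j * Real.log 2 ≤ Real.log n + Real.log (Real.exp 1 + 1 / dist x y) := by
  have hdist := dist_le_of_mem_Qcube hn hx hy
  have hn0 : (0 : ℝ) < n := by linarith
  rw [← Real.log_rpow two_pos, ← Real.log_mul hn0.ne' (by positivity)]
  refine Real.log_le_log (by positivity) ?_
  have key : (2 : ℝ) ^ (j : ℝ) ≤ n * (1 / dist x y) := by
    rw [mul_one_div, le_div_iff₀ hd]
    calc (2 : ℝ) ^ (j : ℝ) * dist x y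
        ≤ (2 : ℝ) ^ (j : ℝ) * (n * (2 : ℝ) ^ (-(j : ℝ))) := by gcongr
      _ = n := by
        rw [Real.rpow_neg two_pos.le]
        field_simp
  refine key.trans ?_
  gcongr
  linarith [Real.exp_pos 1]

/-- Bounded exponents inherit the modulus of their reciprocals, since
`|u - v| = u v |1/u - 1/v|`. -/
lemma abs_sub_le_of_abs_one_div_sub_le {u v b ε : ℝ} (hu : 0 < u) (hv : 0 < v)
    (hub : u ≤ b) (hvb : v ≤ b) (h : |1 / u - 1 / v| ≤ ε) : |u - v| ≤ b ^ 2 * ε := by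
  have hb : 0 < b := hu.trans_le hub
  have e : u - v = -(u * v * (1 / u - 1 / v)) := by
    field_simp
    ring
  rw [e, abs_neg, abs_mul, abs_of_pos (mul_pos hu hv), sq]
  gcongr

/-- If `p : ℝⁿ → (0,∞)` satisfies `0 < p⁻ := inf p ≤ sup p < ∞` and `1/p` is locally
log-Hölder continuous, then there is `C ≥ 1` such that for all `j, m`, all
`x, y ∈ Q_{j,m}` and every `1 ≤ t ≤ 2^{jn/p⁻}` one has `t^{|p(x) − p(y)|} ≤ C`. -/
theorem rpow_abs_sub_bound (n : ℕ) (hn : 0 < n) (p : EuclideanSpace ℝ (Fin n) → ℝ)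
    (b : ℝ) (hpos : ∀ x, 0 < p x) (hinf : 0 < ⨅ x, p x) (hup : ∀ x, p x ≤ b)
    (hinv : LocLogHolder fun x => 1 / p x) :
    ∃ C : ℝ, 1 ≤ C ∧ ∀ (j : ℕ) (m : Fin n → ℤ), ∀ x ∈ Qcube n j m, ∀ y ∈ Qcube n j m,
      ∀ t : ℝ, 1 ≤ t → t ≤ (2 : ℝ) ^ ((j : ℝ) * n / ⨅ z, p z) →
        t ^ |p x - p y| ≤ C := by
  obtain ⟨c, hc, H⟩ := hinv
  set q : ℝ := ⨅ z, p z with hq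
  have hn1 : (1 : ℝ) ≤ n := by exact_mod_cast hn
  have hlogn : 0 ≤ Real.log n := Real.log_nonneg hn1
  refine ⟨Real.exp ((1 + Real.log n) * (n / q) * (b ^ 2 * c)), ?_, ?_⟩
  · exact Real.one_le_exp (by positivity)
  intro j m x hx y hy t ht1 ht
  have ht0 : 0 < t := by linarith
  rcases eq_or_ne x y with rfl | hxy
  · simp only [sub_self, abs_zero, Real.rpow_zero]
    exact Real.one_le_exp (by positivity)
  have hd : 0 < dist x y := dist_pos.mpr hxy
  set L : ℝ := Real.log (Real.exp 1 + 1 / dist x y) with hL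
  have hL1 : 1 ≤ L := by
    rw [hL, Real.le_log_iff_exp_le (by positivity)]
    linarith [show 0 < 1 / dist x y by positivity]
  have hδ := abs_sub_le_of_abs_one_div_sub_le (hpos x) (hpos y) (hup x) (hup y) (H x y)
  have hjL := level_mul_log_two_le hn1 hx hy hd
  rw [← hL] at hδ hjL
  have hlogt : Real.log t ≤ (j * Real.log 2) * (n / q) := by
    have := Real.log_le_log ht0 ht
    rw [Real.log_rpow two_pos] at this
    calc Real.log t ≤ _ := this
      _ = _ := by ring
  have hlogL : Real.log n + L ≤ (1 + Real.log n) * L := by nlinarith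
  rw [Real.rpow_def_of_pos ht0]
  refine Real.exp_le_exp.mpr ?_
  calc Real.log t * |p x - p y|
      ≤ ((1 + Real.log n) * L * (n / q)) * (b ^ 2 * (c / L)) := by
        gcongr
        exact hlogt.trans (mul_le_mul_of_nonneg_right (hjL.trans hlogL) (by positivity))
    _ = (1 + Real.log n) * (n / q) * (b ^ 2 * c) := by
        field_simp

end
end
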